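/- Let Γ₁ and Γ₂ be finitely generated groups which are commensurable, i.e. there exist finite index subgroups H₁ ≤ Γ₁ and H₂ ≤ Γ₂ which are isomorphic. Then Γ₁ is self-simulable if and only if Γ₂ is self-simulable. -/

import Mathlib

open scoped Pointwise

namespace SelfSim

/-- The left shift action of a group `G` on the full shift `G → A`:
`(g · x)(h) = x (g⁻¹ h)`. -/
def shift {G A : Type*} [Group G] (g : G) (x : G → A) : G → A := fun h => x (g⁻¹ * h)

/-- A `G`-subshift: a closed, shift-invariant subset of the full shift `G → A`
(`A` carrying its topology, `G → A` the product topology). -/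
def IsSubshift {G A : Type*} [Group G] [TopologicalSpace A] (X : Set (G → A)) : Prop :=
  IsClosed X ∧ ∀ (g : G) (x : G → A), x ∈ X → shift g x ∈ X

/-- A subshift of finite type: there are a finite set `F ⊆ G` and a set `𝓛` of patterns
on `F` such that `x ∈ X` iff every translate of `x` restricted to `F` lies in `𝓛`. -/
def IsSFT {G A : Type*} [Group G] (X : Set (G → A)) : Prop :=
  ∃ (F : Finset G) (L : Set (↥F → A)),
    ∀ x : G → A, x ∈ X ↔ ∀ g : G, (fun h : ↥F => x (g * (h : G))) ∈ L

/-- `φ` is a topological factor map from the shift action on `Z ⊆ G → A` onto the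
action `act` of `G` on `Y ⊆ β`: continuous on `Z`, mapping `Z` into and onto `Y`,
and equivariant. -/
def IsFactorMapOnto {G A β : Type*} [Group G] [TopologicalSpace A] [TopologicalSpace β]
    (Z : Set (G → A)) (φ : (G → A) → β) (act : G → β → β) (Y : Set β) : Prop :=
  ContinuousOn φ Z ∧ Set.MapsTo φ Z Y ∧ Set.SurjOn φ Z Y ∧
    ∀ (g : G) (x : G → A), x ∈ Z → φ (shift g x) = act g (φ x)

/-- A sofic subshift: a topological factor of some subshift of finite type
(over some finite alphabet, which we may take to be `Fin k`). -/
def IsSofic {G A : Type*} [Group G] [TopologicalSpace A] (Y : Set (G → A)) : Prop :=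
  ∃ (k : ℕ) (Z : Set (G → Fin k)) (φ : (G → Fin k) → (G → A)),
    IsSFT Z ∧ IsFactorMapOnto Z φ shift Y

/-- Recursively enumerable predicate. -/
def RE {α : Type*} [Primcodable α] (p : α → Prop) : Prop :=
  Partrec fun a => Part.assert (p a) fun _ => Part.some ()

/-- `x : ℕ → A` begins with the finite word `w`. -/
def ExtendsWord {A : Type*} (x : ℕ → A) (w : List A) : Prop :=
  ∀ i : Fin w.length, x i = w.get i

/-- A closed subset `Z ⊆ A^ℕ` is effectively closed if the set of words whose
cylinder is disjoint from `Z` is recursively enumerable. -/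
def EffectivelyClosedSet {A : Type*} [Primcodable A] [TopologicalSpace A]
    (Z : Set (ℕ → A)) : Prop :=
  IsClosed Z ∧ RE fun w : List A => ∀ x : ℕ → A, ExtendsWord x w → x ∉ Z

/-- `act` defines an action of `G` on the set `X ⊆ β`. -/
def IsActionOn {G β : Type*} [Group G] (act : G → β → β) (X : Set β) : Prop :=
  (∀ g : G, Set.MapsTo (act g) X X) ∧ (∀ x ∈ X, act 1 x = x) ∧
    ∀ (g h : G) (x : β), x ∈ X → act (g * h) x = act g (act h x)

/-- The set representation of the action `act` of `G` on `X ⊆ A^ℕ` with respect to the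
finite generating tuple `s : Fin m → G` (playing the role of the generating set `S`):
the set of `y ∈ (A^S)^ℕ` of the form `y(n)(s) = (s · x)(n)` for some `x ∈ X`. -/
def SetRep {G A : Type*} [Group G] {m : ℕ} (s : Fin m → G)
    (act : G → (ℕ → A) → ℕ → A) (X : Set (ℕ → A)) : Set (ℕ → (Fin m → A)) :=
  {y | ∃ x ∈ X, ∀ i : Fin m, (fun n => y n i) = act (s i) x}

/-- The action `act` of `G` on the closed set `X ⊆ A^ℕ` is effectively closed with respect
to the finite generating tuple `s` (which contains `1` and generates `G` as a monoid):
its set representation is an effectively closed subset of `(A^S)^ℕ`. -/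
def IsEffClosedActionWith {G A : Type*} [Group G] [Primcodable A] [TopologicalSpace A]
    {m : ℕ} (s : Fin m → G) (act : G → (ℕ → A) → ℕ → A) (X : Set (ℕ → A)) : Prop :=
  IsClosed X ∧ IsActionOn act X ∧ (∃ i, s i = 1) ∧
    Submonoid.closure (Set.range s) = ⊤ ∧
    EffectivelyClosedSet (SetRep s act X)

/-- The action `act` of `G` on `X ⊆ A^ℕ` is effectively closed (with respect to some
finite generating set containing `1`). -/
def IsEffClosedAction {G A : Type*} [Group G] [Primcodable A] [TopologicalSpace A]
    (act : G → (ℕ → A) → ℕ → A) (X : Set (ℕ → A)) : Prop :=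
  ∃ (m : ℕ) (s : Fin m → G), IsEffClosedActionWith s act X

/-- The action `act` of `G` on `X ⊆ A^ℕ` is a topological factor of some `G`-subshift
of finite type. -/
def IsFactorOfSFT {G A : Type*} [Group G] [TopologicalSpace A]
    (act : G → (ℕ → A) → ℕ → A) (X : Set (ℕ → A)) : Prop :=
  ∃ (k : ℕ) (Z : Set (G → Fin k)) (φ : (G → Fin k) → (ℕ → A)),
    IsSFT Z ∧ IsFactorMapOnto Z φ act X

/-- A group `G` is (dynamically) self-simulable if every effectively closed action of `G`
on a closed subset of `{0,1}^ℕ` is a topological factor of a `G`-subshift of finite type. -/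
def SelfSimulable (G : Type*) [Group G] : Prop :=
  ∀ (X : Set (ℕ → Bool)) (act : G → (ℕ → Bool) → ℕ → Bool),
    IsEffClosedAction act X → IsFactorOfSFT act X

/-- Amenability via the Følner condition: for every finite `K` and `δ > 0` there is a
nonempty finite `F` with `|KF △ F| ≤ δ |F|`. -/
def Amenable (G : Type*) [Group G] : Prop :=
  ∀ K : Set G, K.Finite → ∀ δ : ℝ, 0 < δ →
    ∃ F : Set G, F.Finite ∧ F.Nonempty ∧
      ((symmDiff (K * F) F).ncard : ℝ) ≤ δ * F.ncard

/-- A finitely generated group is recursively presented: for some finite tuple generating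
`G` as a monoid, the set of words evaluating to the identity is recursively enumerable. -/
def RecursivelyPresented (G : Type*) [Group G] : Prop :=
  ∃ (m : ℕ) (s : Fin m → G), Submonoid.closure (Set.range s) = ⊤ ∧
    RE fun w : List (Fin m) => (w.map s).prod = 1

/-- A finitely generated group has decidable word problem: for some finite tuple generating
`G` as a monoid, the set of words evaluating to the identity is decidable. -/
def DecidableWordProblem (G : Type*) [Group G] : Prop :=
  ∃ (m : ℕ) (s : Fin m → G), Submonoid.closure (Set.range s) = ⊤ ∧
    ComputablePred fun w : List (Fin m) => (w.map s).prod = 1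

/-- A pattern coding `c` (a finite list of pairs (word over the generators, letter))
holds in the configuration `x` at position `g`: `x (g ⬝ w̲) = a` for every pair `(w, a)`
of `c`. This says exactly that `x ∈ g·[c]`. -/
def PCHolds {G A : Type*} [Group G] {m : ℕ} (s : Fin m → G) (x : G → A) (g : G)
    (c : List (List (Fin m) × A)) : Prop :=
  ∀ p ∈ c, x (g * (p.1.map s).prod) = p.2

/-- A `G`-subshift `X ⊆ A^G` is effectively closed by patterns: for some finite generating
tuple `s`, there is a recursively enumerable set `𝒞` of pattern codings such that `X` is the
set of configurations avoiding every translate of every cylinder `[c]`, `c ∈ 𝒞`. -/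
def EffClosedByPatterns {G A : Type*} [Group G] [Primcodable A] (X : Set (G → A)) : Prop :=
  ∃ (m : ℕ) (s : Fin m → G), Submonoid.closure (Set.range s) = ⊤ ∧
    ∃ 𝒞 : Set (List (List (Fin m) × A)), RE (· ∈ 𝒞) ∧
      X = {x : G → A | ∀ (g : G) (c : List (List (Fin m) × A)), c ∈ 𝒞 → ¬ PCHolds s x g c}

/-- Word metric distance associated to a finite tuple `s` generating `G` as a monoid. -/
noncomputable def wordDist {G : Type*} [Group G] {m : ℕ} (s : Fin m → G) (g h : G) : ℕ :=
  sInf {n : ℕ | ∃ w : List (Fin m), w.length = n ∧ (w.map s).prod = g⁻¹ * h}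

/-- Two finitely generated groups are quasi-isometric (with respect to word metrics given
by some finite generating sets). -/
def QuasiIsometric (G₁ G₂ : Type*) [Group G₁] [Group G₂] : Prop :=
  ∃ (m₁ : ℕ) (s₁ : Fin m₁ → G₁) (m₂ : ℕ) (s₂ : Fin m₂ → G₂),
    Submonoid.closure (Set.range s₁) = ⊤ ∧ Submonoid.closure (Set.range s₂) = ⊤ ∧
    ∃ (f : G₂ → G₁) (A B C : ℝ), 1 ≤ A ∧ 0 ≤ B ∧ 0 ≤ C ∧
      (∀ x y : G₂,
        (1 / A) * (wordDist s₂ x y : ℝ) - B ≤ (wordDist s₁ (f x) (f y) : ℝ) ∧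
        (wordDist s₁ (f x) (f y) : ℝ) ≤ A * (wordDist s₂ x y : ℝ) + B) ∧
      ∀ z : G₁, ∃ x : G₂, (wordDist s₁ z (f x) : ℝ) ≤ C

/-- A finitely presented group: a quotient of a finitely generated free group by the
normal closure of finitely many relators. -/
def FinitelyPresentedGroup (G : Type*) [Group G] : Prop :=
  ∃ (m : ℕ) (f : FreeGroup (Fin m) →* G) (R : Finset (FreeGroup (Fin m))),
    Function.Surjective f ∧ f.ker = Subgroup.normalClosure (R : Set (FreeGroup (Fin m)))

/-- A subgroup `Δ ≤ G` is mediated: there is a finite generating set `T` of `G` such that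
`Δ ∩ tΔt⁻¹` is non-amenable for every `t ∈ T`. -/
def Mediated {G : Type*} [Group G] (Δ : Subgroup G) : Prop :=
  ∃ T : Finset G, Subgroup.closure (T : Set G) = ⊤ ∧
    ∀ t ∈ T, ¬ Amenable ↥(Δ ⊓ Subgroup.map (MulAut.conj t).toMonoidHom Δ)

end SelfSim

/-!
It suffices to compare a finitely generated group `G` with a finite index subgroup `H`.

If `H` is self-simulable and `G` acts effectively on `X`, write the restricted action of `H` as a
factor of an `H`-subshift of finite type `Z`. The configurations of `Z` drawn along one marked left
coset `r H` form a `G`-subshift of finite type; mapping such a configuration to `X` and acting by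
`r` gives a `G`-equivariant map which does not depend on the choice of `r`.

If `G` is self-simulable and `H` acts effectively on `X`, the coinduced action of `G` on
`X ^ (G ⧸ H)` is effective, so it is a factor of a `G`-subshift of finite type. The latter is an
`H`-subshift of finite type over a larger alphabet, and the coordinate of the trivial coset is an
`H`-equivariant map from `X ^ (G ⧸ H)` onto `X`.

Effectiveness of the actions built along the way rests on compactness: for `B` finite, a primitive
recursive condition satisfied by some prefix of every sequence in `B ^ ℕ` is satisfied within a
bounded length, so that images of effectively closed sets under letterwise maps are effectively
closed.
-/

namespace SelfSim

/-! ### Recursive enumerability and quantification over a Cantor space -/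

section RecursivelyEnumerable

variable {α : Type*} [Primcodable α]

theorem RE.exists_of_primrecRel {E : α → ℕ → Prop} (hE : PrimrecRel E) :
    RE fun a => ∃ n, E a n := by
  classical
  have search : Partrec fun a => Nat.rfind fun n => (Part.some (decide (E a n)) : Part Bool) :=
    Partrec.rfind hE.decide.to_comp.partrec
  exact search.dom_re.of_eq fun a => Nat.rfind_dom.trans (by simp)

theorem RE.exists_primrecRel {p : α → Prop} (hp : RE p) :
    ∃ E : α → ℕ → Prop, PrimrecRel E ∧ ∀ a, p a ↔ ∃ n, E a n := by
  obtain ⟨c, hc⟩ := Nat.Partrec.Code.exists_code.1 (show Nat.Partrec _ from hp)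
  refine ⟨fun a n => (c.evaln n (Encodable.encode a)).isSome = true, ?_, fun a => ?_⟩
  · have hevaln : Primrec fun x : α × ℕ => (c.evaln x.2 (Encodable.encode x.1)).isSome :=
      Primrec.option_isSome.comp <| Nat.Partrec.Code.primrec_evaln.comp <|
        (Primrec.snd.pair (Primrec.const c)).pair (Primrec.encode.comp Primrec.fst)
    exact Primrec.eq.comp hevaln (Primrec.const true)
  · have hdom : p a ↔ (c.eval (Encodable.encode a)).Dom := by
      rw [hc]
      simp [Part.assert]
    simp only [hdom, Part.dom_iff_mem, Nat.Partrec.Code.evaln_complete, Option.isSome_iff_exists,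
      Option.mem_def]
    exact exists_comm

end RecursivelyEnumerable

section Words

variable {α A B : Type*}

/-- The prefix of length `n` of the sequence `x`. -/
def initialWord (x : ℕ → A) (n : ℕ) : List A := (List.range n).map x

theorem length_initialWord (x : ℕ → A) (n : ℕ) : (initialWord x n).length = n := by
  simp [initialWord]

theorem getElem?_initialWord_eq_some {x : ℕ → A} {n i : ℕ} {a : A} :
    (initialWord x n)[i]? = some a ↔ i < n ∧ x i = a := by
  simp [initialWord, List.getElem?_eq_some_iff]

theorem take_initialWord (x : ℕ → A) {n k : ℕ} (h : k ≤ n) :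
    (initialWord x n).take k = initialWord x k := by
  simp [initialWord, ← List.map_take, List.take_range, h]

theorem map_initialWord (f : A → B) (x : ℕ → A) (n : ℕ) :
    (initialWord x n).map f = initialWord (fun i => f (x i)) n := by
  simp [initialWord, Function.comp_def]

theorem initialWord_getD_length (u : List A) (a : A) :
    initialWord (fun i => u.getD i a) u.length = u :=
  List.ext_getElem (length_initialWord _ _) fun i _ hi => by simp [initialWord, hi]

theorem extendsWord_iff {x : ℕ → A} {w : List A} :
    ExtendsWord x w ↔ ∀ i a, w[i]? = some a → x i = a := by
  simp only [ExtendsWord, Fin.forall_iff, List.get_eq_getElem, List.getElem?_eq_some_iff]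
  exact ⟨fun h i a ⟨hi, ha⟩ => (h i hi).trans ha, fun h i hi => h i _ ⟨hi, rfl⟩⟩

theorem extendsWord_initialWord {x y : ℕ → A} {n : ℕ} :
    ExtendsWord y (initialWord x n) ↔ y ∈ PiNat.cylinder x n := by
  simp [extendsWord_iff, getElem?_initialWord_eq_some, PiNat.mem_cylinder_iff]

theorem isOpen_setOf_initialWord [TopologicalSpace A] [DiscreteTopology A] (p : List A → Prop)
    (n : ℕ) : IsOpen {x : ℕ → A | p (initialWord x n)} := by
  refine isOpen_iff_mem_nhds.2 fun x hx =>
    Filter.mem_of_superset ((PiNat.isOpen_cylinder _ x n).mem_nhds (PiNat.self_mem_cylinder x n))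
      fun y hy => ?_
  have hxy : initialWord y n = initialWord x n :=
    List.map_congr_left fun i hi => hy i (List.mem_range.1 hi)
  simpa only [Set.mem_ofPred_eq, hxy] using hx

theorem isClosed_setOf_forall_initialWord [TopologicalSpace A] [DiscreteTopology A]
    (R : List A → Prop) : IsClosed {x : ℕ → A | ∀ n, R (initialWord x n)} := by
  rw [Set.ofPred_forall]
  exact isClosed_iInter fun n => isOpen_compl_iff.1 (isOpen_setOf_initialWord (¬ R ·) n)

/-- The words of length `n` over the letters in `L`, as a list so that the enumeration is visibly
primitive recursive. -/
def wordsOfLength (L : List A) (n : ℕ) : List (List A) :=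
  n.rec [[]] fun _ ws => ws.flatMap fun u => L.map fun a => u ++ [a]

theorem mem_wordsOfLength {L : List A} {n : ℕ} {u : List A} :
    u ∈ wordsOfLength L n ↔ u.length = n ∧ ∀ a ∈ u, a ∈ L := by
  induction n generalizing u with
  | zero => simp +contextual [wordsOfLength]
  | succ n ih =>
    change u ∈ (wordsOfLength L n).flatMap (fun v => L.map fun a => v ++ [a]) ↔ _
    simp only [List.mem_flatMap, List.mem_map, ih]
    rcases u.eq_nil_or_concat with rfl | ⟨v, a, rfl⟩
    · simp
    · grind

theorem primrec_wordsOfLength [Primcodable A] (L : List A) : Primrec (wordsOfLength L) := by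
  refine Primrec.nat_rec₁ (f := fun _ ws => ws.flatMap fun u => L.map fun a => u ++ [a]) [[]] ?_
  refine Primrec.list_flatMap Primrec.snd (Primrec.list_map (Primrec.const L) ?_)
  exact Primrec.list_concat.comp (Primrec.snd.comp Primrec.fst) Primrec.snd

theorem exists_forall_exists_initialWord [Finite B] {p : List B → Prop}
    (h : ∀ z : ℕ → B, ∃ n, p (initialWord z n)) :
    ∃ N, ∀ z : ℕ → B, ∃ n ≤ N, p (initialWord z n) := by
  let _ : TopologicalSpace B := ⊥
  have : DiscreteTopology B := ⟨rfl⟩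
  obtain ⟨N, hN⟩ := isCompact_univ.elim_directed_cover
    (fun N => {z : ℕ → B | ∃ n ≤ N, p (initialWord z n)})
    (fun N => by
      simpa only [Set.ofPred_exists, Set.ofPred_and, ← exists_prop] using
        isOpen_iUnion fun n => isOpen_iUnion fun _ => isOpen_setOf_initialWord p n)
    (fun z _ => Set.mem_iUnion.2 ((h z).imp fun n hn => ⟨n, le_rfl, hn⟩))
    (Monotone.directed_le fun M N hMN z ⟨n, hn, hz⟩ => ⟨n, hn.trans hMN, hz⟩)
  exact ⟨N, fun z => hN (Set.mem_univ z)⟩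

theorem RE.forall_exists_initialWord [Primcodable α] [Primcodable B] [Finite B]
    {R : α → List B → Prop} (hR : PrimrecRel R) :
    RE fun a => ∀ z : ℕ → B, ∃ n, R a (initialWord z n) := by
  have := Fintype.ofFinite B
  let L : List B := Finset.univ.toList
  have hprefix : PrimrecRel fun (u : List B) (a : α) =>
      ∃ k ∈ List.range (u.length + 1), R a (u.take k) :=
    PrimrecRel.exists_mem_list (R := fun k (x : List B × α) => R x.2 (x.1.take k))
      (hR.comp (Primrec.snd.comp Primrec.snd)
        (Primrec.list_take.comp Primrec.fst (Primrec.fst.comp Primrec.snd))) |>.comp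
      (Primrec.list_range.comp (Primrec.succ.comp (Primrec.list_length.comp Primrec.fst)))
      Primrec.id
  have hwords : PrimrecRel fun (a : α) n => ∀ u ∈ wordsOfLength L n,
      ∃ k ∈ List.range (u.length + 1), R a (u.take k) :=
    hprefix.forall_mem_list.comp ((primrec_wordsOfLength L).comp Primrec.snd) Primrec.fst
  refine REPred.of_eq (RE.exists_of_primrecRel hwords) fun a => ⟨fun ⟨N, hN⟩ z => ?_, fun h => ?_⟩
  · obtain ⟨k, hk, hR⟩ := hN (initialWord z N)
      (mem_wordsOfLength.2 ⟨length_initialWord z N, by simp [L]⟩)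
    rw [length_initialWord, List.mem_range, Nat.lt_succ_iff] at hk
    exact ⟨k, take_initialWord z hk ▸ hR⟩
  · rcases isEmpty_or_nonempty B with hB | ⟨⟨b⟩⟩
    · exact ⟨1, by simp [wordsOfLength, L]⟩
    · obtain ⟨N, hN⟩ := exists_forall_exists_initialWord h
      refine ⟨N, fun u hu => ?_⟩
      obtain ⟨hu, -⟩ := mem_wordsOfLength.1 hu
      obtain ⟨k, hk, hR⟩ := hN fun i => u.getD i b
      rw [← hu] at hk
      rw [← take_initialWord _ hk, initialWord_getD_length] at hR
      exact ⟨k, by simpa [Nat.lt_succ_iff] using hk, hR⟩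

/-- A letter of `u` shows that `w` is not a prefix of `fun n => F n (z (q n))` for any sequence `z`
beginning with `u`. -/
def RefutesPrefix (q : ℕ → ℕ) (F : ℕ → B → A) (w : List A) (u : List B) : Prop :=
  ∃ i ∈ List.range w.length, ¬ (u[q i]? = none ∨ (u[q i]?).map (F i) = w[i]?)

theorem primrecRel_refutesPrefix [Primcodable A] [Primcodable B] {q : ℕ → ℕ} (hq : Primrec q)
    {F : ℕ → B → A} (hF : Primrec₂ F) : PrimrecRel (RefutesPrefix q F) := by
  have hu : Primrec fun x : ℕ × (List A × List B) => x.2.2[q x.1]? :=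
    Primrec.list_getElem?.comp (Primrec.snd.comp Primrec.snd) (hq.comp Primrec.fst)
  have hw : Primrec fun x : ℕ × (List A × List B) => x.2.1[x.1]? :=
    Primrec.list_getElem?.comp (Primrec.fst.comp Primrec.snd) Primrec.fst
  have hmap : Primrec fun x : ℕ × (List A × List B) => (x.2.2[q x.1]?).map (F x.1) :=
    Primrec.option_map hu (hF.comp (Primrec.fst.comp Primrec.fst) Primrec.snd)
  have hmismatch : PrimrecRel fun i (x : List A × List B) =>
      ¬ (x.2[q i]? = none ∨ (x.2[q i]?).map (F i) = x.1[i]?) :=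
    ((Primrec.eq.comp hu (Primrec.const none)).or (Primrec.eq.comp hmap hw)).not
  exact hmismatch.exists_mem_list.comp
    (Primrec.list_range.comp (Primrec.list_length.comp Primrec.fst)) Primrec.id

theorem exists_refutesPrefix_iff {q : ℕ → ℕ} {F : ℕ → B → A} {w : List A} {z : ℕ → B} :
    (∃ n, RefutesPrefix q F w (initialWord z n)) ↔
      ¬ ExtendsWord (fun n => F n (z (q n))) w := by
  simp only [RefutesPrefix, extendsWord_iff, not_forall, not_or]
  constructor
  · rintro ⟨n, i, hi, hne, hmap⟩
    obtain ⟨b, hb⟩ := Option.ne_none_iff_exists'.1 hne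
    obtain rfl := (getElem?_initialWord_eq_some.1 hb).2
    rw [List.mem_range] at hi
    exact ⟨i, w[i], List.getElem?_eq_getElem hi, fun h => hmap (by simp [hb, h, hi])⟩
  · rintro ⟨i, a, ha, hne⟩
    have hz : (initialWord z (q i + 1))[q i]? = some (z (q i)) :=
      getElem?_initialWord_eq_some.2 ⟨Nat.lt_succ_self _, rfl⟩
    refine ⟨q i + 1, i, List.mem_range.2 (List.getElem?_eq_some_iff.1 ha).1, ?_, ?_⟩
    · simp [hz]
    · simpa [hz, ha] using hne

end Words

/-! ### Effectively closed sets -/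

section EffectivelyClosed

variable {A B : Type*} [Primcodable A] [TopologicalSpace A] [DiscreteTopology A]
  [Primcodable B] [TopologicalSpace B] [DiscreteTopology B] [Finite B]

theorem EffectivelyClosedSet.exists_primrecPred {Z : Set (ℕ → A)} (hZ : EffectivelyClosedSet Z) :
    ∃ R : List A → Prop, PrimrecPred R ∧ Z = {x | ∀ n, R (initialWord x n)} := by
  obtain ⟨E, hE, hZE⟩ := hZ.2.exists_primrecRel
  have hmem (x : ℕ → A) : x ∉ Z ↔ ∃ i k, E (initialWord x i) k := by
    simp only [← hZE, extendsWord_initialWord]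
    refine ⟨fun hx => ?_, fun ⟨i, hi⟩ => hi x (PiNat.self_mem_cylinder x i)⟩
    obtain ⟨i, hi⟩ := PiNat.exists_disjoint_cylinder hZ.1 hx
    exact ⟨i, fun y hy hyZ => Set.disjoint_left.1 hi hyZ hy⟩
  -- The length of the tested prefix codes both a shorter prefix and a number of search steps.
  refine ⟨fun u => ¬ E (u.take u.length.unpair.1) u.length.unpair.2, ?_, Set.ext fun x => ?_⟩
  · have hunpair := Primrec.unpair.comp (Primrec.list_length (α := A))
    exact (hE.comp (Primrec.list_take.comp (Primrec.fst.comp hunpair) Primrec.id)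
      (Primrec.snd.comp hunpair)).not
  · simp only [Set.mem_ofPred_eq, length_initialWord, take_initialWord x (Nat.unpair_left_le _)]
    rw [← not_iff_not, hmem, not_forall]
    simp only [not_not]
    exact ⟨fun ⟨i, k, h⟩ => ⟨Nat.pair i k, by simpa using h⟩, fun ⟨n, h⟩ => ⟨_, _, h⟩⟩

theorem EffectivelyClosedSet.image_of_primrecPred {R : List B → Prop} (hR : PrimrecPred R)
    {q : ℕ → ℕ} (hq : Primrec q) {F : ℕ → B → A} (hF : Primrec₂ F) :
    EffectivelyClosedSet
      ((fun z n => F n (z (q n))) '' {z : ℕ → B | ∀ n, R (initialWord z n)}) := by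
  refine ⟨((isClosed_setOf_forall_initialWord R).isCompact.image ?_).isClosed, ?_⟩
  · exact continuous_pi fun n => continuous_of_discreteTopology.comp (continuous_apply (q n))
  · have hrefutes : PrimrecRel fun (w : List A) u => ¬ R u ∨ RefutesPrefix q F w u :=
      PrimrecPred.or (hR.comp Primrec.snd).not (primrecRel_refutesPrefix hq hF)
    refine REPred.of_eq (RE.forall_exists_initialWord hrefutes) fun w => ?_
    simp only [exists_or, exists_refutesPrefix_iff, Set.mem_image, Set.mem_ofPred_eq]
    refine ⟨?_, fun h z => ?_⟩
    · rintro h _ hxw ⟨z, hz, rfl⟩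
      exact (h z).elim (fun ⟨n, hn⟩ => hn (hz n)) fun hw => hw hxw
    · rw [← not_forall, ← not_and_or]
      exact fun ⟨hz, hw⟩ => h _ hw ⟨z, hz, rfl⟩

theorem EffectivelyClosedSet.image {Z : Set (ℕ → B)} (hZ : EffectivelyClosedSet Z)
    {q : ℕ → ℕ} (hq : Primrec q) {F : ℕ → B → A} (hF : Primrec₂ F) :
    EffectivelyClosedSet ((fun z n => F n (z (q n))) '' Z) := by
  obtain ⟨R, hR, rfl⟩ := hZ.exists_primrecPred
  exact .image_of_primrecPred hR hq hF

theorem EffectivelyClosedSet.of_primrecPred {R : List B → Prop} (hR : PrimrecPred R) :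
    EffectivelyClosedSet {x : ℕ → B | ∀ n, R (initialWord x n)} := by
  simpa using EffectivelyClosedSet.image_of_primrecPred hR Primrec.id Primrec₂.right

theorem EffectivelyClosedSet.inter {Z W : Set (ℕ → B)} (hZ : EffectivelyClosedSet Z)
    (hW : EffectivelyClosedSet W) : EffectivelyClosedSet (Z ∩ W) := by
  obtain ⟨R, hR, rfl⟩ := hZ.exists_primrecPred
  obtain ⟨S, hS, rfl⟩ := hW.exists_primrecPred
  simpa only [← Set.ofPred_and, ← forall_and] using
    EffectivelyClosedSet.of_primrecPred (hR.and hS)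

theorem EffectivelyClosedSet.preimage {Z : Set (ℕ → A)} (hZ : EffectivelyClosedSet Z)
    (f : B → A) : EffectivelyClosedSet {z : ℕ → B | (fun n => f (z n)) ∈ Z} := by
  obtain ⟨R, hR, rfl⟩ := hZ.exists_primrecPred
  have hRf : PrimrecPred fun u : List B => R (u.map f) :=
    hR.comp (Primrec.list_map Primrec.id ((Primrec.dom_finite f).comp Primrec.snd))
  simpa only [map_initialWord, Set.mem_ofPred_eq] using EffectivelyClosedSet.of_primrecPred hRf

theorem EffectivelyClosedSet.univ : EffectivelyClosedSet (Set.univ : Set (ℕ → B)) := by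
  have htrue : PrimrecPred fun _ : List B => True :=
    ⟨inferInstance, by simpa using Primrec.const true⟩
  simpa using EffectivelyClosedSet.of_primrecPred htrue

theorem EffectivelyClosedSet.iInter {N : ℕ} {Z : Fin N → Set (ℕ → B)}
    (hZ : ∀ j, EffectivelyClosedSet (Z j)) : EffectivelyClosedSet (⋂ j, Z j) := by
  induction N with
  | zero => simpa using EffectivelyClosedSet.univ
  | succ N ih =>
    have hinter : ⋂ j, Z j = Z 0 ∩ ⋂ j : Fin N, Z j.succ := by
      ext x
      simp [Fin.forall_fin_succ]
    exact hinter ▸ (hZ 0).inter (ih fun j => hZ j.succ)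

end EffectivelyClosed

/-! ### Set representations do not depend on the generators -/

theorem exists_mem_pow_of_mem_submonoidClosure {M : Type*} [Monoid M] {S : Set M} {g : M}
    (hg : g ∈ Submonoid.closure S) : ∃ n, g ∈ S ^ n := by
  induction hg using Submonoid.closure_induction with
  | mem g hg => exact ⟨1, by simpa using hg⟩
  | one => exact ⟨0, by simp⟩
  | mul g h _ _ ihg ihh =>
    obtain ⟨m, hm⟩ := ihg
    obtain ⟨n, hn⟩ := ihh
    exact ⟨m + n, pow_add S m n ▸ Set.mul_mem_mul hm hn⟩

theorem continuousOn_of_isClosed_graphOn {X Y : Type*} [TopologicalSpace X] [TopologicalSpace Y]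
    [CompactSpace Y] {f : X → Y} {s : Set X} (h : IsClosed (s.graphOn f)) : ContinuousOn f s := by
  refine continuousOn_iff_isClosed.2 fun C hC =>
    ⟨Prod.fst '' (s.graphOn f ∩ Prod.snd ⁻¹' C),
      isClosedMap_fst_of_compactSpace _ (h.inter (hC.preimage continuous_snd)), ?_⟩
  ext x
  simp [and_comm]

theorem exists_tuple_submonoidClosure_eq_top (G : Type*) [Group G] [Group.FG G] :
    ∃ (m : ℕ) (s : Fin m → G), (∃ i, s i = 1) ∧ Submonoid.closure (Set.range s) = ⊤ := by
  obtain ⟨S, hS, hfin⟩ := Monoid.fg_iff.1 (inferInstance : Monoid.FG G)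
  obtain ⟨m, s, -, hs⟩ := (hfin.insert 1).fin_param
  have hone : (1 : G) ∈ Set.range s := hs ▸ Set.mem_insert 1 S
  refine ⟨m, s, hone, ?_⟩
  rw [hs, eq_top_iff, ← hS]
  exact Submonoid.closure_mono (Set.subset_insert 1 S)

section SetRep

variable {G A : Type*} [Group G] [Primcodable A] [TopologicalSpace A]
  {act : G → (ℕ → A) → ℕ → A} {X : Set (ℕ → A)}

theorem IsEffClosedAction.isClosed (h : IsEffClosedAction act X) : IsClosed X :=
  let ⟨_, _, h⟩ := h
  h.1

theorem IsEffClosedAction.isActionOn (h : IsEffClosedAction act X) : IsActionOn act X :=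
  let ⟨_, _, h⟩ := h
  h.2.1

variable [Finite A] [DiscreteTopology A] {m N : ℕ} {s : Fin m → G} {t : Fin N → G}

theorem EffectivelyClosedSet.setRep_comp (ht : EffectivelyClosedSet (SetRep t act X)) {k : ℕ}
    (f : Fin k → Fin N) : EffectivelyClosedSet (SetRep (t ∘ f) act X) := by
  have himage : SetRep (t ∘ f) act X = (fun z n => z n ∘ f) '' SetRep t act X := by
    ext y
    constructor
    · rintro ⟨x, hx, hy⟩
      refine ⟨fun n i => act (t i) x n, ⟨x, hx, fun i => rfl⟩, ?_⟩
      funext n i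
      exact (congrFun (hy i) n).symm
    · rintro ⟨z, ⟨x, hx, hz⟩, rfl⟩
      exact ⟨x, hx, fun i => hz (f i)⟩
  rw [himage]
  have hf : Primrec₂ fun (_ : ℕ) (b : Fin N → A) => b ∘ f :=
    (Primrec.dom_finite fun b : Fin N → A => b ∘ f).comp Primrec.snd
  exact ht.image Primrec.id hf

theorem EffectivelyClosedSet.setRep_mul (hact : IsActionOn act X) {i₀ : Fin m} (hi₀ : s i₀ = 1)
    (hs : EffectivelyClosedSet (SetRep s act X)) (ht : EffectivelyClosedSet (SetRep t act X)) :
    EffectivelyClosedSet (SetRep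
      (fun l : Fin (m * N) => s (finProdFinEquiv.symm l).1 * t (finProdFinEquiv.symm l).2)
      act X) := by
  have hinter := (ht.preimage fun (b : Fin (m * N) → A) j => b (finProdFinEquiv (i₀, j))).inter
    (EffectivelyClosedSet.iInter fun j : Fin N =>
      hs.preimage fun (b : Fin (m * N) → A) i => b (finProdFinEquiv (i, j)))
  convert hinter using 1
  ext y
  simp only [Set.mem_inter_iff, Set.mem_iInter, Set.mem_ofPred_eq]
  constructor
  · rintro ⟨x, hx, hy⟩
    have hy' (i : Fin m) (j : Fin N) :
        (fun n => y n (finProdFinEquiv (i, j))) = act (s i) (act (t j) x) := by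
      simpa [hact.2.2 _ _ _ hx] using hy (finProdFinEquiv (i, j))
    refine ⟨⟨x, hx, fun j => ?_⟩, fun j => ⟨act (t j) x, hact.1 _ hx, fun i => hy' i j⟩⟩
    rw [hy', hi₀, hact.2.1 _ (hact.1 _ hx)]
  · rintro ⟨⟨x, hx, hy⟩, hz⟩
    refine ⟨x, hx, finProdFinEquiv.surjective.forall.2 fun ⟨i, j⟩ => ?_⟩
    obtain ⟨x', hx', hy'⟩ := hz j
    have hx'eq : x' = act (t j) x := by
      rw [← hact.2.1 _ hx', ← hi₀, ← hy', hy]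
    simpa [hact.2.2 _ _ _ hx, ← hx'eq] using hy' i

theorem IsEffClosedActionWith.exists_range_eq_pow (h : IsEffClosedActionWith s act X) (n : ℕ) :
    ∃ (N : ℕ) (t : Fin N → G),
      Set.range t = Set.range s ^ n ∧ EffectivelyClosedSet (SetRep t act X) := by
  obtain ⟨-, hact, ⟨i₀, hi₀⟩, -, hs⟩ := h
  induction n with
  | zero =>
    exact ⟨1, s ∘ fun _ => i₀, by simp [Set.range_comp, hi₀, Set.singleton_one], hs.setRep_comp _⟩
  | succ n ih =>
    obtain ⟨N, t, hrange, ht⟩ := ih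
    refine ⟨m * N, _, ?_, .setRep_mul hact hi₀ hs ht⟩
    rw [pow_succ', ← hrange, ← Set.image2_mul, Set.image2_range]
    exact finProdFinEquiv.symm.surjective.range_comp fun p => s p.1 * t p.2

theorem IsEffClosedAction.effectivelyClosedSet_setRep (h : IsEffClosedAction act X)
    (t : Fin N → G) : EffectivelyClosedSet (SetRep t act X) := by
  obtain ⟨m, s, h⟩ := h
  have hone : (1 : G) ∈ Set.range s := h.2.2.1
  have hmem (i : Fin N) : ∃ n, t i ∈ Set.range s ^ n :=
    exists_mem_pow_of_mem_submonoidClosure (h.2.2.2.1 ▸ Submonoid.mem_top _)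
  choose n hn using hmem
  obtain ⟨M, hM⟩ := Finite.exists_le n
  obtain ⟨k, u, hrange, hu⟩ := h.exists_range_eq_pow M
  have hrange_t (i : Fin N) : t i ∈ Set.range u :=
    hrange ▸ Set.pow_subset_pow_right hone (hM i) (hn i)
  choose f hf using hrange_t
  rw [← show u ∘ f = t from funext hf]
  exact hu.setRep_comp f

theorem IsEffClosedAction.continuousOn (h : IsEffClosedAction act X) (g : G) :
    ContinuousOn (act g) X := by
  have hclosed := (h.effectivelyClosedSet_setRep ![1, g]).1
  have hgraph : X.graphOn (act g) =
      (fun p : (ℕ → A) × (ℕ → A) => fun n => ![p.1 n, p.2 n]) ⁻¹' SetRep ![1, g] act X := by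
    ext ⟨x, y⟩
    simp only [Set.mem_graphOn, Set.mem_preimage, SetRep, Set.mem_ofPred_eq, Fin.forall_fin_two,
      Matrix.cons_val_zero, Matrix.cons_val_one]
    constructor
    · rintro ⟨hx, rfl⟩
      exact ⟨x, hx, (h.isActionOn.2.1 x hx).symm, rfl⟩
    · rintro ⟨x', hx', hxx', hyx'⟩
      obtain rfl : x = x' := hxx'.trans (h.isActionOn.2.1 x' hx')
      exact ⟨hx', hyx'.symm⟩
  refine continuousOn_of_isClosed_graphOn (hgraph ▸ hclosed.preimage ?_)
  fun_prop

theorem IsEffClosedAction.comp_monoidHom {H : Type*} [Group H] [Group.FG H] (f : H →* G)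
    (h : IsEffClosedAction act X) : IsEffClosedAction (fun k => act (f k)) X := by
  obtain ⟨m, s, hone, hs⟩ := exists_tuple_submonoidClosure_eq_top H
  obtain ⟨hmaps, hact_one, hact_mul⟩ := h.isActionOn
  refine ⟨m, s, h.isClosed, ⟨fun k => hmaps (f k), ?_, ?_⟩, hone, hs,
    h.effectivelyClosedSet_setRep (f ∘ s)⟩
  · simpa only [map_one] using hact_one
  · simpa only [map_mul] using fun k l => hact_mul (f k) (f l)

end SetRep

/-! ### Factors of subshifts of finite type -/

section Factor

variable {G A : Type*} [Group G]

theorem IsSFT.of_window {X : Set (G → A)} (F : Finset G) (P : (G → A) → Prop)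
    (hP : ∀ x y, (∀ g ∈ F, x g = y g) → P x → P y)
    (hX : ∀ x, x ∈ X ↔ ∀ g, P fun k => x (g * k)) : IsSFT X := by
  refine ⟨F, {p | ∃ x : G → A, (∀ g : F, x g = p g) ∧ P x}, fun x =>
    (hX x).trans <| forall_congr' fun g => ⟨fun hp => ⟨_, fun _ => rfl, hp⟩, ?_⟩⟩
  rintro ⟨y, hy, hp⟩
  exact hP y _ (fun k hk => hy ⟨k, hk⟩) hp

theorem IsSFT.shift_mem {X : Set (G → A)} (hX : IsSFT X) (g : G) {x : G → A} (hx : x ∈ X) :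
    shift g x ∈ X := by
  obtain ⟨F, L, hL⟩ := hX
  refine (hL _).2 fun k => ?_
  simpa only [shift, mul_assoc] using (hL x).1 hx (g⁻¹ * k)

theorem IsSFT.preimage_equiv {B : Type*} {Z : Set (G → A)} (hZ : IsSFT Z) (e : B ≃ A) :
    IsSFT {z : G → B | e ∘ z ∈ Z} := by
  obtain ⟨F, L, hL⟩ := hZ
  exact ⟨F, {p | e ∘ p ∈ L}, fun z => hL (e ∘ z)⟩

variable [TopologicalSpace A] {β γ : Type*} [TopologicalSpace β] [TopologicalSpace γ]

theorem IsFactorMapOnto.comp {Z : Set (G → A)} {φ : (G → A) → β} {act : G → β → β} {Y : Set β}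
    (hφ : IsFactorMapOnto Z φ act Y) {π : β → γ} {act' : G → γ → γ} {W : Set γ}
    (hcont : ContinuousOn π Y) (hmaps : Set.MapsTo π Y W) (hsurj : Set.SurjOn π Y W)
    (hequiv : ∀ g, ∀ y ∈ Y, π (act g y) = act' g (π y)) :
    IsFactorMapOnto Z (π ∘ φ) act' W := by
  obtain ⟨hφcont, hφmaps, hφsurj, hφequiv⟩ := hφ
  refine ⟨hcont.comp hφcont hφmaps, hmaps.comp hφmaps, hsurj.comp hφsurj, fun g x hx => ?_⟩
  rw [Function.comp_apply, hφequiv g x hx, hequiv g _ (hφmaps hx), Function.comp_apply]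

variable {B : Type*} [TopologicalSpace B]

theorem IsFactorMapOnto.recode {Z : Set (G → A)} {φ : (G → A) → β} {act : G → β → β}
    {Y : Set β} (hφ : IsFactorMapOnto Z φ act Y) (e : B ≃ₜ A) :
    IsFactorMapOnto {z : G → B | e ∘ z ∈ Z} (fun z => φ (e ∘ z)) act Y := by
  obtain ⟨hcont, hmaps, hsurj, hequiv⟩ := hφ
  refine ⟨hcont.comp (by fun_prop) fun z hz => hz, fun z hz => hmaps hz, fun y hy => ?_,
    fun g z hz => hequiv g _ hz⟩
  obtain ⟨z, hz, rfl⟩ := hsurj hy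
  have hez : e ∘ (e.symm ∘ z) = z := by
    funext g
    simp
  exact ⟨e.symm ∘ z, by simpa only [Set.mem_ofPred_eq, hez] using hz, by simp only [hez]⟩

theorem IsFactorOfSFT.of_isFactorMapOnto [Finite B] [DiscreteTopology B]
    {act : G → (ℕ → A) → ℕ → A} {X : Set (ℕ → A)} {Z : Set (G → B)} {φ : (G → B) → ℕ → A}
    (hZ : IsSFT Z) (hφ : IsFactorMapOnto Z φ act X) : IsFactorOfSFT act X := by
  let e : Fin (Nat.card B) ≃ₜ B := (Finite.equivFin B).symm.toHomeomorphOfDiscrete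
  exact ⟨Nat.card B, _, _, hZ.preimage_equiv e.toEquiv, hφ.recode e⟩

end Factor

theorem SelfSimulable.of_mulEquiv {G H : Type*} [Group G] [Group H] [Group.FG H] (e : H ≃* G)
    (hH : SelfSimulable H) : SelfSimulable G := by
  classical
  intro X act hact
  obtain ⟨k, Z, φ, ⟨F, L, hL⟩, hcont, hmaps, hsurj, hequiv⟩ :=
    hH X _ (hact.comp_monoidHom e.toMonoidHom)
  refine ⟨k, {z | z ∘ e ∈ Z}, fun z => φ (z ∘ e), ?_,
    hcont.comp (by fun_prop) fun _ hz => hz, fun _ hz => hmaps hz, fun x hx => ?_,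
    fun g z hz => ?_⟩
  · refine .of_window (F.image e) (fun z => (fun h : F => z (e h)) ∈ L) ?_ fun z => ?_
    · intro z y hzy hz
      have hzy' (h : F) : z (e h) = y (e h) := hzy _ (Finset.mem_image_of_mem e h.2)
      simpa only [hzy'] using hz
    · refine (hL (z ∘ e)).trans (e.surjective.forall.trans (forall_congr' fun h => ?_)).symm
      simp only [Function.comp_apply, map_mul]
  · obtain ⟨z, hz, rfl⟩ := hsurj hx
    have hez : (z ∘ e.symm) ∘ e = z := by simp [Function.comp_assoc]
    exact ⟨z ∘ e.symm, by simpa only [Set.mem_ofPred_eq, hez] using hz, by simp only [hez]⟩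
  · have hshift : shift g z ∘ e = shift (e.symm g) (z ∘ e) := by
      funext h
      simp [shift]
    have hez := hequiv (e.symm g) _ hz
    simpa [hshift] using hez

/-! ### Passing from a finite index subgroup to the group -/

section Induced

variable {G B β : Type*} [Group G] {H : Subgroup G}

/-- The configuration on `H` obtained by reading `w` along the left coset `r H`. -/
def readCoset (r : G) (w : G → (G ⧸ H) × B) : H → B := fun h => (w (r * h)).2

/-- The `G`-subshift induced by the `H`-subshift `Z`. The first layer of a configuration is
determined by its value `r H` at `1` and marks the coset `r H` by the letter `H`; along this coset
the second layer is a configuration of `Z`. -/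
def inducedShift (Z : Set (H → B)) : Set (G → (G ⧸ H) × B) :=
  {w | (∀ g k, (w (g * k)).1 = k⁻¹ • (w g).1) ∧
    ∀ g, (w g).1 = ((1 : G) : G ⧸ H) → readCoset g w ∈ Z}

theorem forall_fst_mul_eq_of_closure_eq_top {S : Set G} (hS : Submonoid.closure S = ⊤)
    {w : G → (G ⧸ H) × B} (hw : ∀ g, ∀ k ∈ S, (w (g * k)).1 = k⁻¹ • (w g).1) (g k : G) :
    (w (g * k)).1 = k⁻¹ • (w g).1 := by
  have hk : k ∈ Submonoid.closure S := hS ▸ Submonoid.mem_top k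
  induction hk using Submonoid.closure_induction generalizing g with
  | mem k hk => exact hw g k hk
  | one => simp
  | mul k l _ _ ihk ihl => rw [← mul_assoc, ihl, ihk, mul_inv_rev, mul_smul]

theorem IsSFT.inducedShift [Group.FG G] {Z : Set (H → B)} (hZ : IsSFT Z) :
    IsSFT (inducedShift Z) := by
  classical
  obtain ⟨S, hS⟩ : ∃ S : Finset G, Submonoid.closure (S : Set G) = ⊤ := Monoid.FG.fg_top
  obtain ⟨F, L, hL⟩ := hZ
  refine .of_window (insert 1 (S ∪ F.image (↑)))
    (fun w => (∀ k ∈ S, (w k).1 = k⁻¹ • (w 1).1) ∧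
      ((w 1).1 = ((1 : G) : G ⧸ H) → (fun h : F => (w (h : H)).2) ∈ L)) ?_ fun w => ?_
  · rintro w v hwv ⟨hmark, hread⟩
    have hone : w 1 = v 1 := hwv 1 (by simp)
    have hgen (k) (hk : k ∈ S) : w k = v k := hwv k (by simp [hk])
    have hwindow (h : F) : w (h : H) = v (h : H) :=
      hwv _ (Finset.mem_insert_of_mem (Finset.mem_union_right _ (Finset.mem_image_of_mem _ h.2)))
    simp only [hone, hwindow] at hmark hread
    exact ⟨fun k hk => hgen k hk ▸ hmark k hk, hread⟩
  · simp only [mul_one, forall_and]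
    refine ⟨fun ⟨hmark, hread⟩ => ⟨fun g k _ => hmark g k, fun g hg => ?_⟩,
      fun ⟨hmark, hread⟩ => ?_⟩
    · simpa [readCoset] using (hL _).1 (hread g hg) 1
    · have hmark' := forall_fst_mul_eq_of_closure_eq_top hS hmark
      refine ⟨hmark', fun g hg => (hL _).2 fun h => ?_⟩
      have hgh : (w (g * h)).1 = ((1 : G) : G ⧸ H) := by
        rw [hmark', hg]
        exact QuotientGroup.eq.2 (by simp)
      simpa [readCoset, mul_assoc] using hread (g * h) hgh

variable {Z : Set (H → B)}

theorem readCoset_shift (g r : G) (w : G → (G ⧸ H) × B) :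
    readCoset r (shift g w) = readCoset (g⁻¹ * r) w := by
  funext h
  simp only [readCoset, shift, mul_assoc]

theorem readCoset_mul_coe (r : G) (h : H) (w : G → (G ⧸ H) × B) :
    readCoset (r * h) w = shift h⁻¹ (readCoset r w) := by
  funext k
  simp only [readCoset, shift, inv_inv, Subgroup.coe_mul, mul_assoc]

theorem shift_mem_inducedShift {w : G → (G ⧸ H) × B} (hw : w ∈ inducedShift Z) (g : G) :
    shift g w ∈ inducedShift Z := by
  refine ⟨fun k l => ?_, fun k hk => ?_⟩
  · simpa [shift, mul_assoc] using hw.1 (g⁻¹ * k) l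
  · rw [readCoset_shift]
    exact hw.2 (g⁻¹ * k) hk

theorem readCoset_mem {w : G → (G ⧸ H) × B} (hw : w ∈ inducedShift Z) {r : G}
    (hr : (w 1).1 = r) : readCoset r w ∈ Z := by
  refine hw.2 r ?_
  rw [← one_mul r, hw.1 1 r, hr]
  exact QuotientGroup.eq.2 (by simp)

/-- The `G`-equivariant extension of an `H`-equivariant map `φ`: move the marked coset back to `H`,
apply `φ` there, and act by a representative of the coset. -/
noncomputable def inducedFactor (act : G → β → β) (φ : (H → B) → β) (w : G → (G ⧸ H) × B) : β :=
  act (w 1).1.out (φ (readCoset (w 1).1.out w))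

variable [TopologicalSpace B] [TopologicalSpace β] {φ : (H → B) → β} {act : G → β → β}
  {X : Set β}

theorem inducedFactor_eq (hact : IsActionOn act X)
    (hφ : IsFactorMapOnto Z φ (fun h : H => act h) X) {w : G → (G ⧸ H) × B}
    (hw : w ∈ inducedShift Z) {r : G} (hr : (w 1).1 = r) :
    inducedFactor act φ w = act r (φ (readCoset r w)) := by
  obtain ⟨-, hmaps, -, hequiv⟩ := hφ
  have hmem := readCoset_mem hw hr
  obtain ⟨h, hh⟩ := QuotientGroup.mk_out_eq_mul H r
  rw [inducedFactor, hr, hh, readCoset_mul_coe, hequiv _ _ hmem, ← hact.2.2 _ _ _ (hmaps hmem)]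
  simp

theorem surjOn_inducedFactor (hact : IsActionOn act X)
    (hφ : IsFactorMapOnto Z φ (fun h : H => act h) X)
    (hZ : ∀ (h : H), ∀ z ∈ Z, shift h z ∈ Z) :
    Set.SurjOn (inducedFactor act φ) (inducedShift Z) X := by
  intro x hx
  obtain ⟨z, hz, rfl⟩ := hφ.2.2.1 hx
  let w : G → (G ⧸ H) × B := fun g =>
    (((g⁻¹ : G) : G ⧸ H), Function.extend Subtype.val z (fun _ => z 1) g)
  have hread : readCoset 1 w = z := by
    funext h
    simp [readCoset, w]
  have hw : w ∈ inducedShift Z := by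
    refine ⟨fun g k => congrArg _ (mul_inv_rev g k), fun g hg => ?_⟩
    have hgH : g ∈ H := by simpa using QuotientGroup.eq.1 hg
    have hreadg := readCoset_mul_coe 1 ⟨g, hgH⟩ w
    rw [one_mul, hread] at hreadg
    exact hreadg ▸ hZ _ z hz
  refine ⟨w, hw, ?_⟩
  rw [inducedFactor_eq hact hφ hw (r := 1) (congrArg _ inv_one), hread, hact.2.1 _ hx]

theorem continuousOn_inducedFactor [TopologicalSpace (G ⧸ H)] [DiscreteTopology (G ⧸ H)]
    (hact : IsActionOn act X) (hcont : ∀ g, ContinuousOn (act g) X)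
    (hφ : IsFactorMapOnto Z φ (fun h : H => act h) X) :
    ContinuousOn (inducedFactor act φ) (inducedShift Z) := by
  refine continuousOn_of_locally_continuousOn fun v _ =>
    ⟨{w | (w 1).1 = (v 1).1}, ?_, rfl, ?_⟩
  · have hmark : Continuous fun w : G → (G ⧸ H) × B => (w 1).1 := by fun_prop
    exact (isOpen_discrete {(v 1).1}).preimage hmark
  · have hread : Continuous (readCoset (v 1).1.out : (G → (G ⧸ H) × B) → H → B) := by
      unfold readCoset
      fun_prop
    have hr {w : G → (G ⧸ H) × B} (hwv : (w 1).1 = (v 1).1) : (w 1).1 = ((v 1).1.out : G) :=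
      hwv.trans (QuotientGroup.out_eq' _).symm
    refine ((hcont (v 1).1.out).comp (hφ.1.comp hread.continuousOn ?_) ?_).congr
      fun w ⟨hw, hwv⟩ => inducedFactor_eq hact hφ hw (hr hwv)
    · exact fun w ⟨hw, hwv⟩ => readCoset_mem hw (hr hwv)
    · exact fun w ⟨hw, hwv⟩ => hφ.2.1 (readCoset_mem hw (hr hwv))

theorem inducedFactor_shift (hact : IsActionOn act X)
    (hφ : IsFactorMapOnto Z φ (fun h : H => act h) X) {w : G → (G ⧸ H) × B}
    (hw : w ∈ inducedShift Z) (g : G) :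
    inducedFactor act φ (shift g w) = act g (inducedFactor act φ w) := by
  obtain ⟨r, hr⟩ := QuotientGroup.mk_surjective (w 1).1
  have hgr : (shift g w 1).1 = (g * r : G) := by
    have hmark := hw.1 1 g⁻¹
    rw [one_mul, inv_inv, ← hr] at hmark
    simpa [shift] using hmark
  rw [inducedFactor_eq hact hφ (shift_mem_inducedShift hw g) hgr, readCoset_shift,
    inv_mul_cancel_left, inducedFactor_eq hact hφ hw hr.symm,
    hact.2.2 _ _ _ (hφ.2.1 (readCoset_mem hw hr.symm))]

theorem IsFactorMapOnto.induced [TopologicalSpace (G ⧸ H)] [DiscreteTopology (G ⧸ H)]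
    (hφ : IsFactorMapOnto Z φ (fun h : H => act h) X) (hact : IsActionOn act X)
    (hcont : ∀ g, ContinuousOn (act g) X) (hZ : ∀ (h : H), ∀ z ∈ Z, shift h z ∈ Z) :
    IsFactorMapOnto (inducedShift Z) (inducedFactor act φ) act X :=
  ⟨continuousOn_inducedFactor hact hcont hφ,
    fun _ hw => hact.1 _ (hφ.2.1 (readCoset_mem hw (QuotientGroup.out_eq' _).symm)),
    surjOn_inducedFactor hact hφ hZ, fun g _ hw => inducedFactor_shift hact hφ hw g⟩

end Induced

theorem IsFactorOfSFT.of_finiteIndex {G A : Type*} [Group G] [Group.FG G] [TopologicalSpace A]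
    {H : Subgroup G} [H.FiniteIndex] {act : G → (ℕ → A) → ℕ → A} {X : Set (ℕ → A)}
    (hact : IsActionOn act X) (hcont : ∀ g, ContinuousOn (act g) X)
    (h : IsFactorOfSFT (fun k : H => act k) X) : IsFactorOfSFT act X := by
  obtain ⟨k, Z, φ, hZ, hφ⟩ := h
  let _ : TopologicalSpace (G ⧸ H) := ⊥
  have : DiscreteTopology (G ⧸ H) := ⟨rfl⟩
  have : Finite (G ⧸ H) := H.finite_quotient_of_finiteIndex
  exact .of_isFactorMapOnto hZ.inducedShift
    (hφ.induced hact hcont fun k _ hz => hZ.shift_mem k hz)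

theorem SelfSimulable.of_finiteIndex {G : Type*} [Group G] [Group.FG G] (H : Subgroup G)
    [H.FiniteIndex] (hH : SelfSimulable H) : SelfSimulable G := by
  intro X act hact
  have : Group.FG H := Subgroup.fg_of_index_ne_zero H
  exact .of_finiteIndex hact.isActionOn hact.continuousOn (hH X _ (hact.comp_monoidHom H.subtype))

/-! ### Passing from the group to a finite index subgroup -/

section CosetRep

variable {G : Type*} [Group G] {H : Subgroup G}

open Classical in
/-- A section of `G → G ⧸ H`, chosen so that the trivial coset is represented by `1`. -/
noncomputable def cosetRep : G ⧸ H → G :=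
  Function.update Quotient.out ((1 : G) : G ⧸ H) 1

theorem mk_cosetRep (q : G ⧸ H) : ((cosetRep q : G) : G ⧸ H) = q := by
  rcases eq_or_ne q (1 : G) with rfl | hq
  · simp [cosetRep]
  · simp [cosetRep, hq]

theorem cosetRep_one : cosetRep ((1 : G) : G ⧸ H) = 1 := by
  simp [cosetRep]

end CosetRep

section Restrict

variable {G B β : Type*} [Group G] {H : Subgroup G}

/-- The decomposition of `G` into the right cosets `H r⁻¹`, for `r` in the chosen set of
representatives of `G ⧸ H`. -/
noncomputable def equivSubgroupProdQuotient : G ≃ H × (G ⧸ H) where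
  toFun g := (⟨g * cosetRep ((g⁻¹ : G) : G ⧸ H), by
    simpa using QuotientGroup.eq.1 (mk_cosetRep ((g⁻¹ : G) : G ⧸ H)).symm⟩, (g⁻¹ : G))
  invFun p := p.1 * (cosetRep p.2)⁻¹
  left_inv g := by simp
  right_inv p := by ext <;> simp [mk_cosetRep]

theorem equivSubgroupProdQuotient_coe_mul (h : H) (g : G) :
    equivSubgroupProdQuotient (h * g) =
      (h * (equivSubgroupProdQuotient g).1, (equivSubgroupProdQuotient (H := H) g).2) := by
  rw [← Equiv.eq_symm_apply]
  simp [equivSubgroupProdQuotient, mul_assoc]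

/-- Configurations on `G` as configurations on `H`, whose letter at `h` lists the letters of the
former at the points `h r⁻¹`. -/
noncomputable def foldCosets : (H → G ⧸ H → B) ≃ (G → B) :=
  (Equiv.curry H (G ⧸ H) B).symm.trans
    (equivSubgroupProdQuotient.symm.arrowCongr (Equiv.refl B))

theorem foldCosets_coe_mul (v : H → G ⧸ H → B) (h : H) (g : G) :
    foldCosets v (h * g) = foldCosets (fun k => v (h * k)) g := by
  simp [foldCosets, equivSubgroupProdQuotient_coe_mul, Function.uncurry]

theorem foldCosets_shift (h : H) (v : H → G ⧸ H → B) :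
    foldCosets (shift h v) = shift (h : G) (foldCosets v) := by
  funext g
  rw [shift, ← Subgroup.coe_inv, foldCosets_coe_mul]
  rfl

theorem IsSFT.preimage_foldCosets [H.FiniteIndex] {Z : Set (G → B)} (hZ : IsSFT Z) :
    IsSFT (foldCosets ⁻¹' Z : Set (H → G ⧸ H → B)) := by
  classical
  have := Fintype.ofFinite (G ⧸ H)
  obtain ⟨F, L, hL⟩ := hZ
  refine .of_window ((Finset.univ ×ˢ F).image fun p : (G ⧸ H) × G =>
      (equivSubgroupProdQuotient ((cosetRep p.1)⁻¹ * p.2)).1)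
    (fun v => ∀ q : G ⧸ H, (fun f : F => foldCosets v ((cosetRep q)⁻¹ * f)) ∈ L) ?_ fun v => ?_
  · intro v u hvu hv q
    convert hv q using 2 with f
    exact congrFun (hvu _ (Finset.mem_image.2 ⟨(q, f), by simp, rfl⟩)).symm _
  · refine (hL _).trans ((equivSubgroupProdQuotient (H := H)).symm.surjective.forall.trans ?_)
    simp only [Prod.forall, ← foldCosets_coe_mul, equivSubgroupProdQuotient, Equiv.coe_fn_symm_mk,
      mul_assoc]

variable [TopologicalSpace B] [TopologicalSpace β]

theorem IsFactorMapOnto.restrict {Z : Set (G → B)} {φ : (G → B) → β} {act : G → β → β}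
    {Y : Set β} (hφ : IsFactorMapOnto Z φ act Y) (H : Subgroup G) :
    IsFactorMapOnto (foldCosets ⁻¹' Z) (φ ∘ foldCosets) (fun h : H => act h) Y := by
  obtain ⟨hcont, hmaps, hsurj, hequiv⟩ := hφ
  have hfold : Continuous (foldCosets : (H → G ⧸ H → B) ≃ (G → B)) := by
    change Continuous fun (v : H → G ⧸ H → B) g =>
      v (equivSubgroupProdQuotient g).1 (equivSubgroupProdQuotient g).2
    fun_prop
  refine ⟨hcont.comp hfold.continuousOn fun _ hv => hv, fun _ hv => hmaps hv,
    fun y hy => ?_, fun h v hv => ?_⟩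
  · obtain ⟨z, hz, rfl⟩ := hsurj hy
    exact ⟨foldCosets.symm z, by simpa using hz, by simp⟩
  · simpa only [Function.comp_apply, foldCosets_shift] using hequiv h _ hv

end Restrict

theorem IsFactorOfSFT.restrict {G A : Type*} [Group G] [TopologicalSpace A]
    {act : G → (ℕ → A) → ℕ → A} {X : Set (ℕ → A)} (h : IsFactorOfSFT act X) (H : Subgroup G)
    [H.FiniteIndex] : IsFactorOfSFT (fun k : H => act k) X := by
  obtain ⟨k, Z, φ, hZ, hφ⟩ := h
  have : Finite (G ⧸ H) := H.finite_quotient_of_finiteIndex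
  exact .of_isFactorMapOnto hZ.preimage_foldCosets (hφ.restrict H)

section Coinduced

variable {G β : Type*} [Group G] {H : Subgroup G}

/-- The cocycle of `G` acting on `G ⧸ H` with values in `H`, relative to the representatives
`cosetRep`. -/
noncomputable def cosetCocycle (g : G) (q : G ⧸ H) : H :=
  ⟨(cosetRep q)⁻¹ * (g * cosetRep (g⁻¹ • q)), by
    rw [← QuotientGroup.eq, mk_cosetRep, ← smul_eq_mul, ← MulAction.Quotient.smul_mk, mk_cosetRep,
      smul_inv_smul]⟩

theorem cosetCocycle_one (q : G ⧸ H) : cosetCocycle 1 q = 1 := by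
  ext
  simp [cosetCocycle]

theorem cosetCocycle_mul (g k : G) (q : G ⧸ H) :
    cosetCocycle (g * k) q = cosetCocycle g q * cosetCocycle k (g⁻¹ • q) := by
  ext
  simp [cosetCocycle, mul_smul, mul_assoc]

theorem coe_inv_smul_one (h : H) : (h : G)⁻¹ • ((1 : G) : G ⧸ H) = ((1 : G) : G ⧸ H) :=
  QuotientGroup.eq.2 (by simp)

theorem cosetCocycle_coe_one (h : H) : cosetCocycle (h : G) ((1 : G) : G ⧸ H) = h := by
  ext
  simp only [cosetCocycle, coe_inv_smul_one, cosetRep_one, inv_one, mul_one, one_mul]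

/-- The action of `G` on `G ⧸ H → β` coinduced by an action of `H` on `β`, that is, the shift action
on the `H`-equivariant maps `G → β`, which are determined by their values at the representatives of
the cosets. -/
noncomputable def coinducedAct (act : H → β → β) (g : G) (ξ : G ⧸ H → β) : G ⧸ H → β :=
  fun q => act (cosetCocycle g q) (ξ (g⁻¹ • q))

theorem IsActionOn.coinduced {act : H → β → β} {X : Set β} (h : IsActionOn act X) :
    IsActionOn (coinducedAct act) (Set.univ.pi fun _ => X) := by
  obtain ⟨hmaps, hone, hmul⟩ := h
  refine ⟨fun g ξ hξ q _ => hmaps _ (hξ _ trivial), fun ξ hξ => ?_, fun g k ξ hξ => ?_⟩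
  · funext q
    simp [coinducedAct, cosetCocycle_one, hone _ (hξ q trivial)]
  · funext q
    simp [coinducedAct, cosetCocycle_mul, hmul _ _ _ (hξ _ trivial), mul_smul]

theorem coinducedAct_coe_one (act : H → β → β) (h : H) (ξ : G ⧸ H → β) :
    coinducedAct act (h : G) ξ ((1 : G) : G ⧸ H) = act h (ξ ((1 : G) : G ⧸ H)) := by
  rw [coinducedAct, cosetCocycle_coe_one, coe_inv_smul_one]

theorem IsActionOn.conj {γ : Type*} {act : G → β → β} {X : Set β} (h : IsActionOn act X)
    (e : β ≃ γ) : IsActionOn (fun g => e.conj (act g)) (e.symm ⁻¹' X) := by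
  obtain ⟨hmaps, hone, hmul⟩ := h
  refine ⟨fun g y hy => ?_, fun y hy => ?_, fun g k y hy => ?_⟩
  · simpa using hmaps g hy
  · simp [hone _ hy]
  · simp [hmul _ _ _ hy]

end Coinduced

section Deinterleave

variable {A : Type*} (ι : Type*) [Finite ι] [Nonempty ι]

/-- The index of the sequence to which the `n`-th letter of an interleaved sequence belongs. -/
noncomputable def interleaveIndex (n : ℕ) : ι := (Finite.equivFin ι).symm (Fin.ofNat _ n)

/-- A sequence as the interleaving of finitely many sequences: the `n`-th letter of the `i`-th of
them is its letter at `n * Nat.card ι + i`, where `ι` is identified with `Fin (Nat.card ι)`. -/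
noncomputable def deinterleave : (ℕ → A) ≃ (ι → ℕ → A) :=
  (((Nat.divModEquiv (Nat.card ι)).trans
    ((Equiv.refl ℕ).prodCongr (Finite.equivFin ι).symm)).arrowCongr (Equiv.refl A)).trans
      ((Equiv.curry ℕ ι A).trans (Equiv.piComm fun _ _ => A))

theorem deinterleave_symm_apply (ξ : ι → ℕ → A) (n : ℕ) :
    (deinterleave ι).symm ξ n = ξ (interleaveIndex ι n) (n / Nat.card ι) :=
  rfl

theorem continuous_deinterleave [TopologicalSpace A] :
    Continuous (deinterleave ι : (ℕ → A) ≃ (ι → ℕ → A)) := by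
  change Continuous fun (x : ℕ → A) i n => x ((Nat.divModEquiv _).symm (n, Finite.equivFin ι i))
  fun_prop

end Deinterleave

theorem primrec₂_comp_interleaveIndex {A B ι : Type*} [Finite ι] [Nonempty ι] [Primcodable A]
    [Primcodable B] [Finite B] (F : ι → B → A) : Primrec₂ fun n b => F (interleaveIndex ι n) b := by
  have hmod : Primrec (Fin.ofNat (Nat.card ι)) :=
    Primrec.fin_val_iff.1 (Primrec.nat_mod.comp Primrec.id (Primrec.const _))
  have hF : Primrec fun p : Fin (Nat.card ι) × B => F ((Finite.equivFin ι).symm p.1) p.2 :=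
    Primrec.dom_finite _
  exact hF.comp ((hmod.comp Primrec.fst).pair Primrec.snd)

section CoinducedEffective

variable {G A : Type*} [Group G] {H : Subgroup G} [H.FiniteIndex]
  {act : H → (ℕ → A) → ℕ → A} {X : Set (ℕ → A)}

/-- Here `z` records a point of `X` for each coset, together with the images of these points under
all the values of the cocycle at the generators; each letter of a translate of a point of the
coinduced system is one of the recorded letters. -/
theorem setRep_coinducedAct {N M K : ℕ} (t : Fin N → G) (e : G ⧸ H ≃ Fin M)
    (f : Fin N × (G ⧸ H) ≃ Fin K) :
    SetRep t (fun g => (deinterleave (G ⧸ H)).symm.conj (coinducedAct act g))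
        (deinterleave (G ⧸ H) ⁻¹' Set.univ.pi fun _ => X) =
      (fun (z : ℕ → Fin M → Fin K → A) n i => z (n / Nat.card (G ⧸ H))
          (e ((t i)⁻¹ • interleaveIndex (G ⧸ H) n)) (f (i, interleaveIndex (G ⧸ H) n))) ''
        ⋂ p, {z | (fun n => z n p) ∈
          SetRep (fun j => cosetCocycle (t (f.symm j).1) (f.symm j).2) act X} := by
  ext y
  constructor
  · rintro ⟨x, hx, hy⟩
    refine ⟨fun n p j => act (cosetCocycle (t (f.symm j).1) (f.symm j).2)
      (deinterleave (G ⧸ H) x (e.symm p)) n, ?_, ?_⟩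
    · exact Set.mem_iInter.2 fun p => ⟨_, hx (e.symm p) trivial, fun j => rfl⟩
    · funext n i
      simp [congrFun (hy i) n, deinterleave_symm_apply, coinducedAct]
  · rintro ⟨z, hz, rfl⟩
    choose ξ hξ hzξ using Set.mem_iInter.1 hz
    refine ⟨(deinterleave (G ⧸ H)).symm fun q => ξ (e q), ?_, fun i => ?_⟩
    · simpa using fun q => hξ (e q)
    · funext n
      have hzn (p : Fin M) (q : G ⧸ H) (n : ℕ) :
          z n p (f (i, q)) = act (cosetCocycle (t i) q) (ξ p) n := by
        simpa using congrFun (hzξ p (f (i, q))) n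
      simp [hzn, deinterleave_symm_apply, coinducedAct]

variable [Finite A] [Primcodable A] [TopologicalSpace A] [DiscreteTopology A]

theorem IsEffClosedAction.coinduced [Group.FG G] (h : IsEffClosedAction act X) :
    IsEffClosedAction (fun g => (deinterleave (G ⧸ H)).symm.conj (coinducedAct act g))
      (deinterleave (G ⧸ H) ⁻¹' Set.univ.pi fun _ => X) := by
  obtain ⟨N, t, hone, ht⟩ := exists_tuple_submonoidClosure_eq_top G
  refine ⟨N, t, ?_, h.isActionOn.coinduced.conj _, hone, ht, ?_⟩
  · exact (isClosed_set_pi fun _ _ => h.isClosed).preimage (continuous_deinterleave _)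
  · let e := Finite.equivFin (G ⧸ H)
    let f := Finite.equivFin (Fin N × (G ⧸ H))
    rw [setRep_coinducedAct t e f]
    refine (EffectivelyClosedSet.iInter fun p => ?_).image
      (Primrec.nat_div.comp Primrec.id (Primrec.const _))
      (primrec₂_comp_interleaveIndex fun q (b : Fin _ → Fin _ → A) i =>
        b (e ((t i)⁻¹ • q)) (f (i, q)))
    exact (h.effectivelyClosedSet_setRep _).preimage fun b : Fin _ → Fin _ → A => b p

end CoinducedEffective

theorem SelfSimulable.subgroup {G : Type*} [Group G] [Group.FG G] (hG : SelfSimulable G)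
    (H : Subgroup G) [H.FiniteIndex] : SelfSimulable H := by
  intro X act hact
  obtain ⟨k, Z, φ, hZ, hφ⟩ := (hG _ _ hact.coinduced).restrict H
  let π : (ℕ → Bool) → ℕ → Bool := fun x => deinterleave (G ⧸ H) x (1 : G)
  have hπ : Continuous π := (continuous_apply _).comp (continuous_deinterleave _)
  refine ⟨k, Z, π ∘ φ, hZ, hφ.comp hπ.continuousOn (fun x hx => hx _ trivial) ?_ ?_⟩
  · exact fun x hx => ⟨(deinterleave (G ⧸ H)).symm fun _ => x, by simp [hx], by simp [π]⟩
  · exact fun h x _ => by simp [π, coinducedAct_coe_one]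

/-- Self-simulability is invariant under commensurability. -/
theorem selfSimulable_iff_of_commensurable
    (G₁ G₂ : Type*) [Group G₁] [Group G₂]
    (hfg₁ : Group.FG G₁) (hfg₂ : Group.FG G₂)
    (H₁ : Subgroup G₁) (H₂ : Subgroup G₂)
    (hi₁ : H₁.FiniteIndex) (hi₂ : H₂.FiniteIndex)
    (e : ↥H₁ ≃* ↥H₂) :
    SelfSimulable G₁ ↔ SelfSimulable G₂ := by
  have : Group.FG H₁ := Subgroup.fg_of_index_ne_zero H₁
  have : Group.FG H₂ := Subgroup.fg_of_index_ne_zero H₂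
  exact ⟨fun h => .of_finiteIndex H₂ (.of_mulEquiv e (h.subgroup H₁)),
    fun h => .of_finiteIndex H₁ (.of_mulEquiv e.symm (h.subgroup H₂))⟩

end SelfSim
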